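/- Let P* ∈ ℙ, let F be a collection of real-valued 𝒜-measurable functions on Ω, and let 𝒰 = {Q ∈ ℙ : Q ≪ P*, Q(|f|) < ∞ and Q(f) = 0 for each f ∈ F}. Assume lim_{k→∞} sup_{Q ∈ 𝒰} Q(|f|·1(|f| > k)) = 0 for all f ∈ F. Then M ∩ 𝒰 ≠ ∅ if and only if Σ_{i=1}^n μ_i(f_i) ≥ inf_{Q ∈ 𝒰} Q(⊕_{i=1}^n f_i) whenever f_i is a bounded 𝒜_i-measurable real function for each i = 1,…,n (with the convention inf ∅ = ∞). -/

import Mathlib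

open MeasureTheory Set ENNReal

namespace FATransport

variable {α : Type*} [MeasurableSpace α]

/-- The collection of measurable sets of `α` (the σ-field `𝒜`), as a type. -/
abbrev MSet (α : Type*) [MeasurableSpace α] := {A : Set α // MeasurableSet A}

/-- A finitely additive probability on the σ-field of `α`, viewed as an element
of `[0,1]^𝒜`: it maps the whole space to `1` and is additive on disjoint pairs. -/
def IsFAP (P : MSet α → unitInterval) : Prop :=
  (P ⟨Set.univ, MeasurableSet.univ⟩ : ℝ) = 1 ∧
    ∀ A B : MSet α, Disjoint A.1 B.1 →
      (P ⟨A.1 ∪ B.1, A.2.union B.2⟩ : ℝ) = (P A : ℝ) + (P B : ℝ)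

/-- `ℙ`, the set of all finitely additive probabilities on `𝒜`, as a subset of
`[0,1]^𝒜` (with its product topology). -/
def FAPs (α : Type*) [MeasurableSpace α] : Set (MSet α → unitInterval) :=
  {P | IsFAP P}

/-- Integral of a simple function with respect to a finitely additive set function. -/
noncomputable def simpleInt (P : MSet α → unitInterval) (s : SimpleFunc α ℝ) : ℝ :=
  ∑ y ∈ s.range, y * (P ⟨(⇑s) ⁻¹' {y}, s.measurableSet_fiber y⟩ : ℝ)

/-- `P(f)` for a bounded measurable `f : α → ℝ`: the supremum of the integrals of
simple functions below `f` (for a f.a.p. `P` and bounded measurable `f` this agrees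
with the integral defined by uniform approximation by simple functions). -/
noncomputable def fapInt (P : MSet α → unitInterval) (f : α → ℝ) : ℝ :=
  sSup (simpleInt P '' {s : SimpleFunc α ℝ | ∀ x, s x ≤ f x})

/-- `P(c) = sup_k P(c ∧ k)` for a `[0,∞]`-valued `c`. -/
noncomputable def fapIntTop (P : MSet α → unitInterval) (c : α → ℝ≥0∞) : ℝ≥0∞ :=
  ⨆ k : ℕ, ENNReal.ofReal (fapInt P (fun x => (c x ⊓ (k : ℝ≥0∞)).toReal))

/-- A real-valued `f` is `P`-integrable iff `P(|f|) < ∞`. -/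
def FapIntegrable (P : MSet α → unitInterval) (f : α → ℝ) : Prop :=
  fapIntTop P (fun x => ENNReal.ofReal |f x|) < ⊤

/-- `P(f) = P(f⁺) - P(f⁻)` for a (`P`-integrable) real-valued `f`. -/
noncomputable def fapIntR (P : MSet α → unitInterval) (f : α → ℝ) : ℝ :=
  (fapIntTop P (fun x => ENNReal.ofReal (f x))).toReal -
    (fapIntTop P (fun x => ENNReal.ofReal (-f x))).toReal

/-- `P ≪ Q` for finitely additive probabilities. -/
def FapAC (P Q : MSet α → unitInterval) : Prop :=
  ∀ A : MSet α, (Q A : ℝ) = 0 → (P A : ℝ) = 0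

variable {n : ℕ} {Ω : Fin n → Type*} [∀ i, MeasurableSpace (Ω i)]

/-- `M`, the set of finitely additive probabilities on `𝒜 = ⊗ᵢ 𝒜ᵢ` whose
`i`-th marginal is `μ i` for every `i`. -/
def couplings (μ : ∀ i, Measure (Ω i)) : Set (MSet (∀ i, Ω i) → unitInterval) :=
  {P | IsFAP P ∧ ∀ (i : Fin n) (B : Set (Ω i)) (hB : MeasurableSet B),
    (P ⟨(fun ω => ω i) ⁻¹' B, (measurable_pi_apply i) hB⟩ : ℝ) = (μ i B).toReal}

end FATransport

namespace FATransport

variable {n : ℕ} {Ω : Fin n → Type*} [∀ i, MeasurableSpace (Ω i)]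

/-- Condition (4.1) of the paper: `Σᵢ μᵢ(fᵢ) ≥ inf_{Q ∈ 𝒰} Q(⊕ᵢ fᵢ)` for all bounded
measurable `fᵢ : Ωᵢ → ℝ`. The infimum is taken in `EReal`, so that `inf ∅ = ∞` (and
the condition fails when `𝒰 = ∅`). -/
def DualCond (μ : ∀ i, Measure (Ω i))
    (U : Set (MSet (∀ i, Ω i) → unitInterval)) : Prop :=
  ∀ f : ∀ i, Ω i → ℝ, (∀ i, Measurable (f i)) → (∀ i, ∃ C, ∀ x, |f i x| ≤ C) →
    (⨅ Q ∈ U, ((fapInt Q (fun ω => ∑ i, f i (ω i)) : ℝ) : EReal)) ≤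
      ((∑ i, ∫ x, f i x ∂(μ i) : ℝ) : EReal)

end FATransport

namespace FATransport

section Aux

variable {α : Type*} [MeasurableSpace α]

open Classical in
noncomputable def TT (P : MSet α → unitInterval) (s : Set α) : ℝ →L[ℝ] ℝ :=
  if h : MeasurableSet s then (P ⟨s, h⟩ : ℝ) • ContinuousLinearMap.id ℝ ℝ else 0

theorem TT_apply (P : MSet α → unitInterval) {s : Set α} (h : MeasurableSet s) (x : ℝ) :
    TT P s x = (P ⟨s, h⟩ : ℝ) * x := by
  simp [TT, h]

theorem simpleInt_eq (P : MSet α → unitInterval) (s : SimpleFunc α ℝ) :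
    simpleInt P s = s.setToSimpleFunc (TT P) := by
  unfold simpleInt SimpleFunc.setToSimpleFunc
  refine Finset.sum_congr rfl fun y _ => ?_
  rw [TT_apply P (s.measurableSet_fiber y), mul_comm]

theorem IsFAP.add {P : MSet α → unitInterval} (hP : IsFAP P) :
    FinMeasAdditive (0 : Measure α) (TT P) := by
  intro s t hs ht _ _ hst
  ext
  simp [TT_apply, hs, ht, hs.union ht, hP.2 ⟨s, hs⟩ ⟨t, ht⟩ hst]

theorem IsFAP.empty {P : MSet α → unitInterval} (hP : IsFAP P) :
    (P ⟨∅, MeasurableSet.empty⟩ : ℝ) = 0 := by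
  have := hP.2 ⟨∅, MeasurableSet.empty⟩ ⟨∅, MeasurableSet.empty⟩ (by simp)
  simp only [Set.union_self] at this
  linarith

theorem IsFAP.TT_empty {P : MSet α → unitInterval} (hP : IsFAP P) : TT P ∅ = 0 := by
  ext
  rw [TT_apply P MeasurableSet.empty, hP.empty]
  simp

theorem simpleInt_add {P : MSet α → unitInterval} (hP : IsFAP P) (s t : SimpleFunc α ℝ) :
    simpleInt P (s + t) = simpleInt P s + simpleInt P t := by
  simp only [simpleInt_eq]
  exact SimpleFunc.setToSimpleFunc_add (μ := 0) _ hP.add (by simp) (by simp)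

theorem simpleInt_mono {P : MSet α → unitInterval} (hP : IsFAP P) {s t : SimpleFunc α ℝ}
    (h : ∀ x, s x ≤ t x) : simpleInt P s ≤ simpleInt P t := by
  simp only [simpleInt_eq]
  refine SimpleFunc.setToSimpleFunc_mono (μ := 0) hP.add ?_ (by simp) (by simp) h
  intro s hs _ x hx
  rw [TT_apply P hs]
  exact mul_nonneg (P _).2.1 hx

theorem simpleInt_const {P : MSet α → unitInterval} (hP : IsFAP P) (c : ℝ) :
    simpleInt P (SimpleFunc.const α c) = c := by
  rw [simpleInt_eq, SimpleFunc.setToSimpleFunc_const _ hP.TT_empty, TT_apply P MeasurableSet.univ,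
    hP.1, one_mul]

theorem simpleInt_ind {P : MSet α → unitInterval} (hP : IsFAP P) {A : Set α}
    (hA : MeasurableSet A) (c : ℝ) :
    simpleInt P (SimpleFunc.piecewise A hA (SimpleFunc.const α c) (SimpleFunc.const α 0))
      = c * P ⟨A, hA⟩ := by
  rw [simpleInt_eq, SimpleFunc.setToSimpleFunc_indicator _ hP.TT_empty, TT_apply P hA, mul_comm]

theorem fapInt_simple {P : MSet α → unitInterval} (hP : IsFAP P) (s : SimpleFunc α ℝ) :
    fapInt P s = simpleInt P s := by
  refine IsGreatest.csSup_eq ⟨⟨s, fun x => le_rfl, rfl⟩, ?_⟩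
  rintro _ ⟨t, ht, rfl⟩
  exact simpleInt_mono hP ht

def BM (g : α → ℝ) : Prop := Measurable g ∧ ∃ C, ∀ x, |g x| ≤ C

theorem BM.approx {g : α → ℝ} (hg : BM g) {ε : ℝ} (hε : 0 < ε) :
    ∃ s : SimpleFunc α ℝ, ∀ x, s x ≤ g x ∧ g x ≤ s x + ε := by
  obtain ⟨hm, C, hC⟩ := hg
  have hm' : Measurable fun x => (⌊g x / ε⌋ : ℤ) := Int.measurable_floor.comp (hm.div_const ε)
  have hfin : (Set.range fun x => (⌊g x / ε⌋ : ℤ)).Finite := by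
    refine (Set.finite_Icc (⌊-C / ε⌋) (⌊C / ε⌋)).subset ?_
    rintro _ ⟨x, rfl⟩
    have := abs_le.1 (hC x)
    constructor
    · exact Int.floor_le_floor (by gcongr; exact this.1)
    · exact Int.floor_le_floor (by gcongr; exact this.2)
  let s0 : SimpleFunc α ℤ := ⟨fun x => ⌊g x / ε⌋, fun y => hm' (measurableSet_singleton y), hfin⟩
  refine ⟨s0.map (fun z : ℤ => ε * (z : ℝ)), fun x => ?_⟩
  have h1 := Int.floor_le (g x / ε)
  have h2 := Int.lt_floor_add_one (g x / ε)
  have h3 : ε * (g x / ε) = g x := by field_simp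
  change ε * (⌊g x / ε⌋ : ℝ) ≤ g x ∧ g x ≤ ε * (⌊g x / ε⌋ : ℝ) + ε
  constructor <;> nlinarith

theorem fapInt_bdd {P : MSet α → unitInterval} (hP : IsFAP P) {g : α → ℝ} {t : SimpleFunc α ℝ}
    (h : ∀ x, g x ≤ t x) :
    ∀ y ∈ simpleInt P '' {s : SimpleFunc α ℝ | ∀ x, s x ≤ g x}, y ≤ simpleInt P t := by
  rintro _ ⟨s, hs, rfl⟩
  exact simpleInt_mono hP fun x => (hs x).trans (h x)

theorem simpleInt_add_const {P : MSet α → unitInterval} (hP : IsFAP P) (s : SimpleFunc α ℝ)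
    (c : ℝ) : simpleInt P (s + SimpleFunc.const α c) = simpleInt P s + c := by
  rw [simpleInt_add hP, simpleInt_const hP]

/-- sandwich -/
theorem fapInt_sandwich {P : MSet α → unitInterval} (hP : IsFAP P) {g : α → ℝ}
    {s : SimpleFunc α ℝ} {ε : ℝ} (h : ∀ x, s x ≤ g x ∧ g x ≤ s x + ε) :
    simpleInt P s ≤ fapInt P g ∧ fapInt P g ≤ simpleInt P s + ε := by
  have hb := fapInt_bdd hP (g := g) (t := s + SimpleFunc.const α ε) (fun x => by simpa using (h x).2)
  have hmem : simpleInt P s ∈ simpleInt P '' {s : SimpleFunc α ℝ | ∀ x, s x ≤ g x} :=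
    ⟨s, fun x => (h x).1, rfl⟩
  constructor
  · exact le_csSup ⟨_, hb⟩ hmem
  · rw [← simpleInt_add_const hP]
    exact csSup_le ⟨_, hmem⟩ hb

theorem fapInt_mono {P : MSet α → unitInterval} (hP : IsFAP P) {g h : α → ℝ} (hg : BM g)
    (hh : BM h) (hgh : ∀ x, g x ≤ h x) : fapInt P g ≤ fapInt P h := by
  refine le_of_forall_pos_le_add fun ε hε => ?_
  obtain ⟨s, hs⟩ := hg.approx (half_pos hε)
  obtain ⟨t, ht⟩ := hh.approx (half_pos hε)
  have h1 := fapInt_sandwich hP hs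
  have h2 := fapInt_sandwich hP ht
  have h3 : simpleInt P s ≤ simpleInt P (t + SimpleFunc.const α (ε/2)) :=
    simpleInt_mono hP fun x => by
      have := (hs x).1; have := (ht x).2; have := hgh x
      simp only [SimpleFunc.coe_add, SimpleFunc.coe_const, Pi.add_apply, Function.const_apply]
      linarith
  rw [simpleInt_add_const hP] at h3
  linarith

theorem BM.add {g h : α → ℝ} (hg : BM g) (hh : BM h) : BM (fun x => g x + h x) := by
  obtain ⟨hg, C, hC⟩ := hg
  obtain ⟨hh, D, hD⟩ := hh
  exact ⟨hg.add hh, C + D, fun x => (abs_add_le _ _).trans (add_le_add (hC x) (hD x))⟩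

theorem fapInt_add {P : MSet α → unitInterval} (hP : IsFAP P) {g h : α → ℝ} (hg : BM g)
    (hh : BM h) : fapInt P (fun x => g x + h x) = fapInt P g + fapInt P h := by
  refine eq_of_forall_dist_le fun ε hε => ?_
  obtain ⟨s, hs⟩ := hg.approx (half_pos hε)
  obtain ⟨t, ht⟩ := hh.approx (half_pos hε)
  have h1 := fapInt_sandwich hP hs
  have h2 := fapInt_sandwich hP ht
  have h3 := fapInt_sandwich hP (g := fun x => g x + h x) (s := s + t) (ε := ε) (fun x => by
    have := hs x; have := ht x
    simp only [SimpleFunc.coe_add, Pi.add_apply]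
    constructor <;> linarith)
  rw [simpleInt_add hP] at h3
  rw [Real.dist_eq, abs_le]
  constructor <;> linarith

theorem BM.zero : BM (fun _ : α => (0 : ℝ)) := ⟨measurable_const, 0, by simp⟩

theorem fapInt_zero {P : MSet α → unitInterval} (hP : IsFAP P) : fapInt P (fun _ => 0) = 0 := by
  have := fapInt_add hP BM.zero BM.zero
  simp only [add_zero] at this
  linarith

theorem fapInt_sum {P : MSet α → unitInterval} (hP : IsFAP P) {ι : Type*} (S : Finset ι)
    (g : ι → α → ℝ) (hg : ∀ i, BM (g i)) :
    BM (fun x => ∑ i ∈ S, g i x) ∧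
    fapInt P (fun x => ∑ i ∈ S, g i x) = ∑ i ∈ S, fapInt P (g i) := by
  classical
  induction S using Finset.induction_on with
  | empty => simpa using ⟨BM.zero, fapInt_zero hP⟩
  | insert a S ha ih =>
    simp only [Finset.sum_insert ha]
    exact ⟨(hg a).add ih.1, by rw [fapInt_add hP (hg a) ih.1, ih.2]⟩

theorem BM.ind {A : Set α} (hA : MeasurableSet A) (c : ℝ) :
    BM (A.indicator fun _ => c) :=
  ⟨measurable_const.indicator hA, |c|, fun x => by
    by_cases h : x ∈ A <;> simp [h]⟩

theorem fapInt_ind {P : MSet α → unitInterval} (hP : IsFAP P) {A : Set α}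
    (hA : MeasurableSet A) (c : ℝ) : fapInt P (A.indicator fun _ => c) = c * P ⟨A, hA⟩ := by
  rw [← simpleInt_ind hP hA, ← fapInt_simple hP]
  congr 1

theorem continuous_simpleInt (s : SimpleFunc α ℝ) :
    Continuous fun P : MSet α → unitInterval => simpleInt P s := by
  unfold simpleInt
  refine continuous_finsetSum _ fun y _ => continuous_const.mul ?_
  exact continuous_subtype_val.comp (continuous_apply _)

theorem continuousOn_fapInt {g : α → ℝ} (hg : BM g) :
    ContinuousOn (fun P => fapInt P g) (FAPs α) := by
  refine continuousOn_of_uniform_approx_of_continuousOn fun u hu => ?_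
  obtain ⟨ε, hε, hu⟩ := Metric.mem_uniformity_dist.1 hu
  obtain ⟨s, hs⟩ := hg.approx (half_pos hε)
  refine ⟨_, (continuous_simpleInt s).continuousOn, fun P hP => hu ?_⟩
  have := fapInt_sandwich hP hs
  rw [Real.dist_eq, abs_lt]
  constructor <;> linarith

theorem isClosed_FAPs : IsClosed (FAPs α) := by
  have hc : ∀ A : MSet α, Continuous fun P : MSet α → unitInterval => (P A : ℝ) := fun A =>
    continuous_subtype_val.comp (continuous_apply _)
  unfold FAPs IsFAP
  simp only [ofPred_and, ofPred_forall]
  refine (isClosed_eq (hc _) continuous_const).inter ?_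
  exact isClosed_iInter fun A => isClosed_iInter fun B => isClosed_iInter fun _ =>
    isClosed_eq (hc _) ((hc _).add (hc _))

/-- R is the convex combination. -/
def Mix (a b : ℝ) (P Q R : MSet α → unitInterval) : Prop :=
  ∀ A, (R A : ℝ) = a * P A + b * Q A

theorem exists_mix {a b : ℝ} (ha : 0 ≤ a) (hb : 0 ≤ b) (hab : a + b = 1)
    (P Q : MSet α → unitInterval) : ∃ R, Mix a b P Q R := by
  refine ⟨fun A => ⟨a * P A + b * Q A, ?_, ?_⟩, fun A => rfl⟩
  · exact add_nonneg (mul_nonneg ha (P A).2.1) (mul_nonneg hb (Q A).2.1)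
  · have := (P A).2.2; have := (Q A).2.2
    nlinarith

theorem Mix.fap {a b : ℝ} (hab : a + b = 1) {P Q R : MSet α → unitInterval}
    (h : Mix a b P Q R) (hP : IsFAP P) (hQ : IsFAP Q) : IsFAP R := by
  refine ⟨by rw [h, hP.1, hQ.1]; linarith, fun A B hAB => ?_⟩
  rw [h, h, h, hP.2 A B hAB, hQ.2 A B hAB]; ring

theorem Mix.fapInt {a b : ℝ} (ha : 0 ≤ a) (hb : 0 ≤ b) (hab : a + b = 1)
    {P Q R : MSet α → unitInterval}
    (h : Mix a b P Q R) (hP : IsFAP P) (hQ : IsFAP Q) {g : α → ℝ} (hg : BM g) :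
    fapInt R g = a * fapInt P g + b * fapInt Q g := by
  refine eq_of_forall_dist_le fun ε hε => ?_
  obtain ⟨s, hs⟩ := hg.approx hε
  have h1 := fapInt_sandwich hP hs
  have h2 := fapInt_sandwich hQ hs
  have h3 := fapInt_sandwich (h.fap hab hP hQ) hs
  have h4 : simpleInt R s = a * simpleInt P s + b * simpleInt Q s := by
    unfold simpleInt
    rw [Finset.mul_sum, Finset.mul_sum, ← Finset.sum_add_distrib]
    refine Finset.sum_congr rfl fun y _ => ?_
    rw [h]; ring
  have e1 := mul_le_mul_of_nonneg_left h1.1 ha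
  have e2 := mul_le_mul_of_nonneg_left h1.2 ha
  have e3 := mul_le_mul_of_nonneg_left h2.1 hb
  have e4 := mul_le_mul_of_nonneg_left h2.2 hb
  have e5 : a * ε + b * ε = ε := by rw [← add_mul, hab, one_mul]
  rw [Real.dist_eq, abs_le]
  constructor <;> linarith

/-- truncation -/
noncomputable def tr (c : α → ℝ≥0∞) (k : ℕ) : α → ℝ := fun x => (c x ⊓ (k : ℝ≥0∞)).toReal

theorem BM.tr {c : α → ℝ≥0∞} (hc : Measurable c) (k : ℕ) : BM (tr c k) := by
  refine ⟨(hc.inf measurable_const).ennreal_toReal, k, fun x => ?_⟩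
  unfold FATransport.tr
  rw [abs_of_nonneg ENNReal.toReal_nonneg]
  have := ENNReal.toReal_mono (ENNReal.natCast_ne_top k) (inf_le_right : c x ⊓ (k:ℝ≥0∞) ≤ k)
  simpa using this

theorem fapIntTop_le_iff {P : MSet α → unitInterval} {c : α → ℝ≥0∞} {e : ℝ} (he : 0 ≤ e) :
    fapIntTop P c ≤ ENNReal.ofReal e ↔ ∀ j, fapInt P (tr c j) ≤ e := by
  unfold fapIntTop
  rw [iSup_le_iff]
  exact forall_congr' fun j => ENNReal.ofReal_le_ofReal_iff he

theorem fapInt_nonneg {P : MSet α → unitInterval} (hP : IsFAP P) {g : α → ℝ} (hg : BM g)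
    (h : ∀ x, 0 ≤ g x) : 0 ≤ fapInt P g := by
  rw [← fapInt_zero hP]
  exact fapInt_mono hP BM.zero hg h

noncomputable def tl (f : α → ℝ) (k : ℕ) : α → ℝ≥0∞ :=
  fun ω => if (k : ℝ) < |f ω| then ENNReal.ofReal |f ω| else 0

theorem measurable_tl {f : α → ℝ} (hf : Measurable f) (k : ℕ) : Measurable (tl f k) := by
  unfold tl
  exact Measurable.ite (measurableSet_lt measurable_const hf.norm)
    hf.norm.ennreal_ofReal measurable_const

theorem tr_le {f : α → ℝ} {c : α → ℝ≥0∞} (hc : ∀ x, c x ≤ ENNReal.ofReal |f x|) (k j : ℕ) (x : α) :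
    tr c j x ≤ tr c k x + tr (tl f k) j x := by
  have hfin : c x ≠ ⊤ := ne_top_of_le_ne_top ENNReal.ofReal_ne_top (hc x)
  unfold tr tl
  split_ifs with h
  · have : (c x ⊓ (j : ℝ≥0∞)).toReal ≤ (ENNReal.ofReal |f x| ⊓ (j : ℝ≥0∞)).toReal :=
      ENNReal.toReal_mono (ne_top_of_le_ne_top ENNReal.ofReal_ne_top inf_le_left)
        (inf_le_inf_right _ (hc x))
    have h0 : 0 ≤ (c x ⊓ (k : ℝ≥0∞)).toReal := ENNReal.toReal_nonneg
    linarith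
  · have h1 : c x ≤ k := (hc x).trans (by
      rw [← ENNReal.ofReal_natCast]; exact ENNReal.ofReal_le_ofReal (not_lt.1 h))
    rw [inf_eq_left.2 h1]
    have : (c x ⊓ (j : ℝ≥0∞)).toReal ≤ (c x).toReal := ENNReal.toReal_mono hfin inf_le_left
    simpa using this

theorem tail_bound {P : MSet α → unitInterval} (hP : IsFAP P) {f : α → ℝ} (hf : Measurable f)
    {c : α → ℝ≥0∞} (hcm : Measurable c) (hc : ∀ x, c x ≤ ENNReal.ofReal |f x|) {k : ℕ} {e : ℝ}
    (he : 0 ≤ e) (h : ∀ j, fapInt P (tr (tl f k) j) ≤ e) :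
    fapIntTop P c < ⊤ ∧ fapInt P (tr c k) ≤ (fapIntTop P c).toReal ∧
      (fapIntTop P c).toReal ≤ fapInt P (tr c k) + e := by
  have h0 : 0 ≤ fapInt P (tr c k) := fapInt_nonneg hP (BM.tr hcm k) fun x => ENNReal.toReal_nonneg
  have h1 : fapIntTop P c ≤ ENNReal.ofReal (fapInt P (tr c k) + e) := by
    rw [fapIntTop_le_iff (by linarith)]
    intro j
    have := fapInt_mono hP (BM.tr hcm j) ((BM.tr hcm k).add (BM.tr (measurable_tl hf k) j))
      (tr_le hc k j)
    rw [fapInt_add hP (BM.tr hcm k) (BM.tr (measurable_tl hf k) j)] at this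
    linarith [h j]
  have h2 : fapIntTop P c < ⊤ := h1.trans_lt ENNReal.ofReal_lt_top
  refine ⟨h2, ?_, ENNReal.toReal_le_of_le_ofReal (by linarith) h1⟩
  rw [← ENNReal.ofReal_le_iff_le_toReal h2.ne]
  exact le_iSup (fun k : ℕ => ENNReal.ofReal (FATransport.fapInt P (tr c k))) k

/-- Key characterization of the moment constraint under uniform integrability. -/
def Good (f : α → ℝ) (ε : ℕ → ℝ≥0∞) (Q : MSet α → unitInterval) : Prop :=
  ∀ (k : ℕ) (e : ℝ), 0 ≤ e → ε k ≤ ENNReal.ofReal e →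
    (∀ j, fapInt Q (tr (tl f k) j) ≤ e) ∧
    |fapInt Q (tr (fun x => ENNReal.ofReal (f x)) k) -
      fapInt Q (tr (fun x => ENNReal.ofReal (-f x)) k)| ≤ e

theorem fapIntR_near {P : MSet α → unitInterval} (hP : IsFAP P) {f : α → ℝ} (hf : Measurable f)
    {k : ℕ} {e : ℝ} (he : 0 ≤ e) (h : ∀ j, fapInt P (tr (tl f k) j) ≤ e) :
    |fapIntR P f - (fapInt P (tr (fun x => ENNReal.ofReal (f x)) k) -
      fapInt P (tr (fun x => ENNReal.ofReal (-f x)) k))| ≤ e := by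
  have h1 := tail_bound hP hf hf.ennreal_ofReal
    (fun x => ENNReal.ofReal_le_ofReal (le_abs_self _)) he h
  have h2 := tail_bound hP hf hf.neg.ennreal_ofReal
    (fun x => ENNReal.ofReal_le_ofReal (neg_le_abs _)) he h
  simp only [Pi.neg_apply] at h2
  unfold fapIntR
  rw [abs_le]
  constructor <;> linarith

theorem good_of {P : MSet α → unitInterval} (hP : IsFAP P) {f : α → ℝ} (hf : Measurable f)
    {ε : ℕ → ℝ≥0∞} (hε : ∀ k, fapIntTop P (tl f k) ≤ ε k) (h0 : fapIntR P f = 0) :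
    Good f ε P := by
  intro k e he hk
  have h1 := (fapIntTop_le_iff he).1 ((hε k).trans hk)
  refine ⟨h1, ?_⟩
  have := fapIntR_near hP hf he h1
  rwa [h0, zero_sub, abs_neg] at this

theorem of_good {P : MSet α → unitInterval} (hP : IsFAP P) {f : α → ℝ} (hf : Measurable f)
    {ε : ℕ → ℝ≥0∞} (hε : Filter.Tendsto ε Filter.atTop (nhds 0)) (h : Good f ε P) :
    FapIntegrable P f ∧ fapIntR P f = 0 := by
  have key : ∀ e : ℝ, 0 < e → ∃ k, ε k ≤ ENNReal.ofReal e := fun e he =>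
    ((hε.eventually (gt_mem_nhds (ENNReal.ofReal_pos.2 he))).exists).imp fun k hk => hk.le
  constructor
  · obtain ⟨k, hk⟩ := key 1 one_pos
    exact (tail_bound hP hf hf.norm.ennreal_ofReal (fun x => le_rfl) zero_le_one
      (h k 1 zero_le_one hk).1).1
  · refine eq_of_forall_dist_le fun e he => ?_
    obtain ⟨k, hk⟩ := key _ (half_pos he)
    obtain ⟨h1, h2⟩ := h k _ (half_pos he).le hk
    have h3 := fapIntR_near hP hf (half_pos he).le h1
    rw [Real.dist_eq]
    rw [abs_le] at *
    constructor <;> linarith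

theorem closed_le {g h : α → ℝ} (hg : BM g) (hh : BM h) (e : ℝ) :
    IsClosed {P | IsFAP P ∧ |fapInt P g - fapInt P h| ≤ e} :=
  (((continuousOn_fapInt hg).sub (continuousOn_fapInt hh)).abs).preimage_isClosed_of_isClosed
    isClosed_FAPs isClosed_Iic

theorem closed_le' {g : α → ℝ} (hg : BM g) (e : ℝ) :
    IsClosed {P | IsFAP P ∧ fapInt P g ≤ e} :=
  (continuousOn_fapInt hg).preimage_isClosed_of_isClosed isClosed_FAPs isClosed_Iic

theorem isClosed_good {f : α → ℝ} (hf : Measurable f) (ε : ℕ → ℝ≥0∞) :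
    IsClosed {P | IsFAP P ∧ Good f ε P} := by
  have : {P : MSet α → unitInterval | IsFAP P ∧ Good f ε P} = FAPs α ∩
      ⋂ (k : ℕ) (e : ℝ) (_ : 0 ≤ e) (_ : ε k ≤ ENNReal.ofReal e),
      (⋂ j : ℕ, {P | IsFAP P ∧ fapInt P (tr (tl f k) j) ≤ e}) ∩
      {P | IsFAP P ∧ |fapInt P (tr (fun x => ENNReal.ofReal (f x)) k) -
        fapInt P (tr (fun x => ENNReal.ofReal (-f x)) k)| ≤ e} := by
    ext P
    simp only [Good, FAPs, mem_ofPred_eq, mem_inter_iff, mem_iInter]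
    constructor
    · rintro ⟨h1, h2⟩
      exact ⟨h1, fun k e he hk => ⟨fun j => ⟨h1, (h2 k e he hk).1 j⟩, h1, (h2 k e he hk).2⟩⟩
    · rintro ⟨h1, h2⟩
      exact ⟨h1, fun k e he hk => ⟨fun j => ((h2 k e he hk).1 j).2, (h2 k e he hk).2.2⟩⟩
  rw [this]
  refine isClosed_FAPs.inter <| isClosed_iInter fun k => isClosed_iInter fun e =>
    isClosed_iInter fun _ => isClosed_iInter fun _ => IsClosed.inter ?_ ?_
  · exact isClosed_iInter fun j => closed_le' (BM.tr (measurable_tl hf k) j) e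
  · exact closed_le (BM.tr hf.ennreal_ofReal k) (BM.tr hf.neg.ennreal_ofReal k) e

theorem Mix.good {a b : ℝ} (ha : 0 ≤ a) (hb : 0 ≤ b) (hab : a + b = 1)
    {P Q R : MSet α → unitInterval}
    (h : Mix a b P Q R) (hP : IsFAP P) (hQ : IsFAP Q) {f : α → ℝ} (hf : Measurable f)
    {ε : ℕ → ℝ≥0∞} (gP : Good f ε P) (gQ : Good f ε Q) : Good f ε R := by
  intro k e he hk
  obtain ⟨p1, p2⟩ := gP k e he hk
  obtain ⟨q1, q2⟩ := gQ k e he hk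
  have e5 : a * e + b * e = e := by rw [← add_mul, hab, one_mul]
  constructor
  · intro j
    rw [h.fapInt ha hb hab hP hQ (BM.tr (measurable_tl hf k) j)]
    have := mul_le_mul_of_nonneg_left (p1 j) ha
    have := mul_le_mul_of_nonneg_left (q1 j) hb
    linarith
  · rw [h.fapInt ha hb hab hP hQ (BM.tr hf.ennreal_ofReal k),
      h.fapInt ha hb hab hP hQ (g := tr (fun x => ENNReal.ofReal (-f x)) k)
        (BM.tr hf.neg.ennreal_ofReal k)]
    rw [abs_le] at *
    have := mul_le_mul_of_nonneg_left p2.1 ha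
    have := mul_le_mul_of_nonneg_left q2.1 hb
    have := mul_le_mul_of_nonneg_left p2.2 ha
    have := mul_le_mul_of_nonneg_left q2.2 hb
    constructor <;> linarith

end Aux

theorem BM.sum {α : Type*} [MeasurableSpace α] {ι : Type*} (S : Finset ι)
    (g : ι → α → ℝ) (hg : ∀ i, BM (g i)) : BM (fun x => ∑ i ∈ S, g i x) := by
  classical
  induction S using Finset.induction_on with
  | empty => simpa using BM.zero
  | insert a S ha ih =>
    simp only [Finset.sum_insert ha]
    exact (hg a).add ih

theorem marginal_le {n : ℕ} {Ω : Fin n → Type*} [∀ i, MeasurableSpace (Ω i)]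
    (μ : ∀ i, Measure (Ω i)) [∀ i, IsProbabilityMeasure (μ i)]
    {Q : MSet (∀ i, Ω i) → unitInterval} (hQ : Q ∈ couplings μ) (i : Fin n) {g : Ω i → ℝ}
    (hg : BM g) : fapInt Q (fun ω => g (ω i)) ≤ ∫ x, g x ∂(μ i) := by
  refine le_of_forall_pos_le_add fun ε hε => ?_
  obtain ⟨s, hs⟩ := hg.approx hε
  let s' : SimpleFunc (∀ i, Ω i) ℝ := s.comp (fun ω => ω i) (measurable_pi_apply i)
  have h1 := (fapInt_sandwich hQ.1 (g := fun ω : ∀ i, Ω i => g (ω i)) (s := s') (ε := ε)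
    (fun ω => hs (ω i))).2
  have hsi : Integrable s (μ i) := SimpleFunc.integrable_of_isFiniteMeasure s
  have hgi : Integrable g (μ i) := by
    obtain ⟨hm, C, hC⟩ := hg
    exact Integrable.of_bound hm.aestronglyMeasurable C (Filter.Eventually.of_forall hC)
  have h2 : simpleInt Q s' = ∫ x, s x ∂(μ i) := by
    rw [SimpleFunc.integral_eq_sum s hsi]
    unfold simpleInt
    have e : ∀ y, (Q ⟨s' ⁻¹' {y}, s'.measurableSet_fiber y⟩ : ℝ) = (μ i).real (s ⁻¹' {y}) :=
      fun y => hQ.2 i (s ⁻¹' {y}) (s.measurableSet_fiber y)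
    simp only [smul_eq_mul, mul_comm _ (Q _ : ℝ)]
    rw [Finset.sum_congr rfl fun y _ => by rw [e y]]
    refine Finset.sum_subset (SimpleFunc.range_comp_subset_range _ _) fun y _ hy => ?_
    have : s' ⁻¹' {y} = ∅ := by
      rw [Set.eq_empty_iff_forall_notMem]
      intro ω hω
      exact hy (SimpleFunc.mem_range.2 ⟨ω, hω⟩)
    rw [← e y]
    simp only [this]
    rw [hQ.1.empty, zero_mul]
  have h3 : ∫ x, s x ∂(μ i) ≤ ∫ x, g x ∂(μ i) := integral_mono hsi hgi fun x => (hs x).1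
  linarith


/-- let `𝒰 = {Q ∈ ℙ : Q ≪ P*, Q(|f|) < ∞ and Q(f) = 0 for each f ∈ F}`.
If `lim_k sup_{Q ∈ 𝒰} Q(|f|·1(|f|>k)) = 0` for all `f ∈ F`, then `M ∩ 𝒰 ≠ ∅` iff
`Σᵢ μᵢ(fᵢ) ≥ inf_{Q ∈ 𝒰} Q(⊕ᵢ fᵢ)` for all bounded measurable `fᵢ` (with `inf ∅ = ∞`). -/
theorem nonempty_iff_dualCond_ac_F
    {n : ℕ} (hn : 0 < n) {Ω : Fin n → Type*} [∀ i, MeasurableSpace (Ω i)]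
    (μ : ∀ i, Measure (Ω i)) [∀ i, IsProbabilityMeasure (μ i)]
    (Pstar : MSet (∀ i, Ω i) → unitInterval) (hPstar : IsFAP Pstar)
    (F : Set ((∀ i, Ω i) → ℝ)) (hF : ∀ f ∈ F, Measurable f)
    (U : Set (MSet (∀ i, Ω i) → unitInterval))
    (hU : U = {Q | IsFAP Q ∧ FapAC Q Pstar ∧
      ∀ f ∈ F, FapIntegrable Q f ∧ fapIntR Q f = 0})
    (hUI : ∀ f ∈ F,
      Filter.Tendsto
        (fun k : ℕ => ⨆ Q ∈ U,
          fapIntTop Q (fun ω => if (k : ℝ) < |f ω| then ENNReal.ofReal |f ω| else 0))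
        Filter.atTop (nhds 0)) :
    (couplings μ ∩ U).Nonempty ↔ DualCond μ U := by
  classical
  set ε : ((∀ i, Ω i) → ℝ) → ℕ → ℝ≥0∞ := fun f k => ⨆ Q ∈ U, fapIntTop Q (tl f k) with hεdef
  have hUI' : ∀ f ∈ F, Filter.Tendsto (ε f) Filter.atTop (nhds 0) := hUI
  -- characterization of U
  have hUc : ∀ Q, Q ∈ U ↔ IsFAP Q ∧ FapAC Q Pstar ∧ ∀ f ∈ F, Good f (ε f) Q := by
    intro Q
    constructor
    · intro hQ
      have hQ' := hQ
      rw [hU] at hQ'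
      refine ⟨hQ'.1, hQ'.2.1, fun f hf => good_of hQ'.1 (hF f hf) (fun k => ?_) (hQ'.2.2 f hf).2⟩
      exact le_iSup₂ (f := fun Q (_ : Q ∈ U) => fapIntTop Q (tl f k)) Q hQ
    · rintro ⟨h1, h2, h3⟩
      rw [hU]
      exact ⟨h1, h2, fun f hf => of_good h1 (hF f hf) (hUI' f hf) (h3 f hf)⟩
  have hev : ∀ A : MSet (∀ i, Ω i),
      Continuous fun P : MSet (∀ i, Ω i) → unitInterval => (P A : ℝ) := fun A =>
    continuous_subtype_val.comp (continuous_apply _)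
  have hUclosed : IsClosed U := by
    have : U = FAPs _ ∩ (⋂ (A : MSet (∀ i, Ω i)) (_ : (Pstar A : ℝ) = 0), {Q | (Q A : ℝ) = 0}) ∩
        ⋂ f ∈ F, {Q | IsFAP Q ∧ Good f (ε f) Q} := by
      ext Q
      rw [hUc]
      simp only [FapAC, FAPs, mem_ofPred_eq, mem_inter_iff, mem_iInter]
      constructor
      · rintro ⟨h1, h2, h3⟩
        exact ⟨⟨h1, h2⟩, fun f hf => ⟨h1, h3 f hf⟩⟩
      · rintro ⟨⟨h1, h2⟩, h3⟩
        exact ⟨h1, h2, fun f hf => (h3 f hf).2⟩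
    rw [this]
    refine (isClosed_FAPs.inter ?_).inter ?_
    · exact isClosed_iInter fun A => isClosed_iInter fun _ => isClosed_eq (hev A) continuous_const
    · exact isClosed_iInter fun f => isClosed_iInter fun hf => isClosed_good (hF f hf) _
  have hUcomp : IsCompact U := hUclosed.isCompact
  have hUmix : ∀ {a b : ℝ}, 0 ≤ a → 0 ≤ b → a + b = 1 → ∀ P ∈ U, ∀ Q ∈ U, ∀ R,
      Mix a b P Q R → R ∈ U := by
    intro a b ha hb hab P hP Q hQ R hR
    rw [hUc] at hP hQ ⊢
    refine ⟨hR.fap hab hP.1 hQ.1, fun A hA => ?_, fun f hf =>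
      hR.good ha hb hab hP.1 hQ.1 (hF f hf) (hP.2.2 f hf) (hQ.2.2 f hf)⟩
    rw [hR, hP.2.1 A hA, hQ.2.1 A hA]; simp
  constructor
  · rintro ⟨Q, hQM, hQU⟩ f hfm hfb
    refine (iInf₂_le Q hQU).trans ?_
    rw [EReal.coe_le_coe_iff]
    have hB : ∀ i, BM (fun ω : ∀ i, Ω i => f i (ω i)) := fun i =>
      ⟨(hfm i).comp (measurable_pi_apply i), (hfb i).imp fun C hC ω => hC _⟩
    rw [(fapInt_sum hQM.1 Finset.univ (fun i (ω : ∀ i, Ω i) => f i (ω i)) hB).2]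
    exact Finset.sum_le_sum fun i _ => marginal_le μ hQM i ⟨hfm i, hfb i⟩
  · intro hD
    let pre : Fin n → (∀ i, MSet (Ω i)) → MSet (∀ i, Ω i) := fun i B =>
      ⟨(fun ω => ω i) ⁻¹' (B i).1, (measurable_pi_apply i) (B i).2⟩
    have main : (U ∩ ⋂ B : ∀ i, MSet (Ω i),
        {Q | ∀ i, (Q (pre i B) : ℝ) = (μ i (B i).1).toReal}).Nonempty := by
      refine hUcomp.inter_iInter_nonempty _ (fun B => ?_) fun S => ?_
      · simp only [ofPred_forall]
        exact isClosed_iInter fun i => isClosed_eq (hev _) continuous_const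
      let T : (MSet (∀ i, Ω i) → unitInterval) → (Fin n × S → ℝ) :=
        fun Q p => (Q (pre p.1 p.2.1) : ℝ)
      let m : Fin n × S → ℝ := fun p => (μ p.1 (p.2.1 p.1).1).toReal
      have hTc : Continuous T := continuous_pi fun p => hev _
      suffices hm : m ∈ T '' U by
        obtain ⟨Q, hQ, hQm⟩ := hm
        refine ⟨Q, hQ, ?_⟩
        simp only [mem_iInter]
        intro B hB i
        exact congrFun hQm (i, ⟨B, hB⟩)
      by_contra hm
      have hconv : Convex ℝ (T '' U) := by
        rintro _ ⟨P, hP, rfl⟩ _ ⟨Q, hQ, rfl⟩ a b ha hb hab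
        obtain ⟨R, hR⟩ := exists_mix ha hb hab P Q
        refine ⟨R, hUmix ha hb hab P hP Q hQ R hR, ?_⟩
        ext p
        simp [T, hR _]
      obtain ⟨φ, u, hu1, hu2⟩ := geometric_hahn_banach_point_closed hconv
        (hUcomp.image hTc).isClosed hm
      let a : Fin n × S → ℝ := fun p => φ fun j => if p = j then 1 else 0
      have hφ : ∀ x, φ x = ∑ i, ∑ B : S, a (i, B) * x (i, B) := by
        intro x
        have := LinearMap.pi_apply_eq_sum_univ (φ : (Fin n × S → ℝ) →ₗ[ℝ] ℝ) x
        rw [Fintype.sum_prod_type] at this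
        simpa [a, mul_comm] using this
      let f : ∀ i, Ω i → ℝ := fun i x => ∑ B : S, (B.1 i).1.indicator (fun _ => a (i, B)) x
      have hfB : ∀ i, BM (f i) := fun i => BM.sum _ _ fun B => BM.ind (B.1 i).2 _
      have h1 := hD f (fun i => (hfB i).1) (fun i => (hfB i).2)
      have h2 : ∑ i, ∫ x, f i x ∂(μ i) = φ m := by
        rw [hφ]
        refine Finset.sum_congr rfl fun i _ => ?_
        simp only [f]
        rw [integral_finsetSum _ fun B _ => (integrable_const _).indicator (B.1 i).2]
        refine Finset.sum_congr rfl fun B _ => ?_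
        rw [integral_indicator_const _ (B.1 i).2]
        simp [m, Measure.real, mul_comm]
      have h3 : ∀ Q ∈ U, fapInt Q (fun ω => ∑ i, f i (ω i)) = φ (T Q) := by
        intro Q hQ
        have hQf := ((hUc Q).1 hQ).1
        have hind : ∀ i (B : S), BM (fun ω : ∀ i, Ω i =>
            (B.1 i).1.indicator (fun _ => a (i, B)) (ω i)) := fun i B =>
          BM.ind (pre i B.1).2 (a (i, B))
        have hs := fun i => fapInt_sum hQf Finset.univ (fun (B : S) (ω : ∀ i, Ω i) =>
            (B.1 i).1.indicator (fun _ => a (i, B)) (ω i)) (hind i)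
        rw [hφ, (fapInt_sum hQf Finset.univ (fun i (ω : ∀ i, Ω i) => f i (ω i))
          (fun i => (hs i).1)).2]
        refine Finset.sum_congr rfl fun i _ => ?_
        refine (hs i).2.trans (Finset.sum_congr rfl fun B _ => ?_)
        exact fapInt_ind hQf (pre i B.1).2 (a (i, B))
      rw [h2] at h1
      have h4 : (u : EReal) ≤ ⨅ Q ∈ U, ((fapInt Q (fun ω => ∑ i, f i (ω i)) : ℝ) : EReal) := by
        refine le_iInf₂ fun Q hQ => ?_
        rw [EReal.coe_le_coe_iff, h3 Q hQ]
        exact (hu2 _ ⟨Q, hQ, rfl⟩).le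
      have h5 := EReal.coe_le_coe_iff.1 (h4.trans h1)
      linarith
    obtain ⟨Q, hQU, hQ⟩ := main
    refine ⟨Q, ⟨((hUc Q).1 hQU).1, fun i B hB => ?_⟩, hQU⟩
    have h := mem_iInter.1 hQ
      (Function.update (fun j => (⟨Set.univ, MeasurableSet.univ⟩ : MSet (Ω j))) i ⟨B, hB⟩) i
    simpa only [pre, Function.update_self] using h

end FATransport
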